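/- For every task graph G and present bias set B with range τ = max B / min B, the price of variability r(G, B^V)/sup{r(G,{β}) : β ∈ B} is at most τ + 1. -/

import Mathlib

/-- Kleinberg–Oren task graph: a finite directed graph on `Fin n` with
non-negative edge costs and terminal nodes `s` and `t`. -/
structure TaskGraph (n : ℕ) where
  E : Finset (Fin n × Fin n)
  c : Fin n × Fin n → ℝ
  c_nonneg : ∀ e, 0 ≤ c e
  s : Fin n
  t : Fin n

namespace TaskGraph

variable {n : ℕ}

/-- `P` is a path in `G` along edges of `G` ending at the target `t`. -/
def IsPath (G : TaskGraph n) : List (Fin n) → Prop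
  | [] => False
  | [v] => v = G.t
  | v :: w :: rest => (v, w) ∈ G.E ∧ IsPath G (w :: rest)

/-- Total cost of a path given as a list of nodes. -/
def pathCost (G : TaskGraph n) : List (Fin n) → ℝ
  | [] => 0
  | [_] => 0
  | v :: w :: rest => G.c (v, w) + pathCost G (w :: rest)

/-- `d(v)`: cost of a cheapest path from `v` to `t`. -/
noncomputable def dist (G : TaskGraph n) (v : Fin n) : ℝ :=
  sInf (G.pathCost '' {P | G.IsPath P ∧ P.head? = some v})

/-- `d_β(v,w) = c(v,w) + β·d(w)`: perceived cost of edge `(v,w)` for present bias `β`. -/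
noncomputable def pc (G : TaskGraph n) (β : ℝ) (e : Fin n × Fin n) : ℝ :=
  G.c e + β * G.dist e.2

/-- One step of the agent with present bias `β`: traverse an edge minimizing perceived cost. -/
def Step (G : TaskGraph n) (β : ℝ) (v w : Fin n) : Prop :=
  (v, w) ∈ G.E ∧ ∀ w', (v, w') ∈ G.E → G.pc β (v, w) ≤ G.pc β (v, w')

/-- Nodes reachable by the agent with present bias `β` starting from `s`. -/
def Reachable (G : TaskGraph n) (β : ℝ) (v : Fin n) : Prop :=
  Relation.ReflTransGen (G.Step β) G.s v

/-- `G` is motivating for present bias `β` and reward `r`: on every greedy walk the agent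
never reaches a node `v ≠ t` where the minimum perceived cost exceeds `β·r`. -/
def Motivating (G : TaskGraph n) (β r : ℝ) : Prop :=
  ∀ v, G.Reachable β v → v ≠ G.t → ∃ w, G.Step β v w ∧ G.pc β (v, w) ≤ β * r

/-- One step of an agent whose present bias varies node by node according to `βc`. -/
def StepV (G : TaskGraph n) (βc : Fin n → ℝ) (v w : Fin n) : Prop :=
  (v, w) ∈ G.E ∧ ∀ w', (v, w') ∈ G.E → G.pc (βc v) (v, w) ≤ G.pc (βc v) (v, w')

def ReachableV (G : TaskGraph n) (βc : Fin n → ℝ) (v : Fin n) : Prop :=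
  Relation.ReflTransGen (G.StepV βc) G.s v

/-- `G` is motivating for the present bias configuration `βc` and reward `r`. -/
def MotivatingV (G : TaskGraph n) (βc : Fin n → ℝ) (r : ℝ) : Prop :=
  ∀ v, G.ReachableV βc v → v ≠ G.t → ∃ w, G.StepV βc v w ∧ G.pc (βc v) (v, w) ≤ βc v * r

/-- The task graph obtained by adding the extra costs of a cost configuration `ct`. -/
def withCost (G : TaskGraph n) (ct : Fin n × Fin n → ℝ) (h : ∀ e, 0 ≤ ct e) : TaskGraph n where
  E := G.E
  c := fun e => G.c e + ct e
  c_nonneg := fun e => add_nonneg (G.c_nonneg e) (h e)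
  s := G.s
  t := G.t

/-- `r(G,B)`: infimum over rewards admitting a cost configuration motivating for all `β ∈ B`. -/
noncomputable def rewardInf (G : TaskGraph n) (B : Set ℝ) : ℝ :=
  sInf {r : ℝ | ∃ ct : Fin n × Fin n → ℝ, ∃ h : ∀ e, 0 ≤ ct e,
    ∀ β ∈ B, (G.withCost ct h).Motivating β r}

/-- `r(G,B^V)`: infimum over rewards admitting a cost configuration motivating for all
present bias configurations with values in `B`. -/
noncomputable def rewardInfV (G : TaskGraph n) (B : Set ℝ) : ℝ :=
  sInf {r : ℝ | ∃ ct : Fin n × Fin n → ℝ, ∃ h : ∀ e, 0 ≤ ct e,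
    ∀ βc : Fin n → ℝ, (∀ v, βc v ∈ B) → (G.withCost ct h).MotivatingV βc r}

end TaskGraph

/-!
It suffices to bound `r(G, B^V)` by `(τ + 1) r` whenever some cost configuration motivates the
least bias `b` at reward `r > 0`; take that configuration as part of the graph. The walk of the
`b`-biased agent is the intended route. From a node `v` of the route the agent may also leave along
a shortest path, but the designer charges a toll there, so that completing this detour costs
`d(v) + φ(d(v))` in the new graph, where `φ(x) = r - (r - x)₊² / r ≤ r`. All other edges are
blocked.

Since `φ ≤ r`, every bias `β ≥ b` perceives at most `2 β r` on the route. On a detour, the agent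
can be stuck at a node `u` only if `d(u)` exceeds `b τ r + (1 - b) δ`, with `δ` the distance at
which the detour meets the route again. In that case, `φ` grows enough between `δ` and `d(u)` for
the toll to deter every bias from entering the detour. The quadratic shape of `φ` comes from this
requirement: for `δ = 0`, bias `β = x / r` and `b → 0` it reads `φ(x) ≥ r - (r - x)² / r`.
-/

namespace TaskGraph

variable {n : ℕ} {G : TaskGraph n}

section Paths

theorem pathCost_nonneg (G : TaskGraph n) : ∀ l : List (Fin n), 0 ≤ G.pathCost l
  | [] => le_rfl
  | [_] => le_rfl
  | _ :: w :: l => add_nonneg (G.c_nonneg _) (pathCost_nonneg G (w :: l))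

theorem dist_nonneg (G : TaskGraph n) (v : Fin n) : 0 ≤ G.dist v := by
  apply Real.sInf_nonneg
  rintro _ ⟨l, -, rfl⟩
  exact G.pathCost_nonneg l

theorem pc_nonneg (G : TaskGraph n) {β : ℝ} (hβ : 0 ≤ β) (e : Fin n × Fin n) : 0 ≤ G.pc β e :=
  add_nonneg (G.c_nonneg _) (mul_nonneg hβ (G.dist_nonneg _))

theorem dist_le_pathCost {v : Fin n} {l : List (Fin n)} (hl : G.IsPath (v :: l)) :
    G.dist v ≤ G.pathCost (v :: l) :=
  csInf_le ⟨0, by rintro _ ⟨l, -, rfl⟩; exact G.pathCost_nonneg l⟩ ⟨v :: l, ⟨hl, rfl⟩, rfl⟩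

theorem le_dist {v : Fin n} {x : ℝ} (hv : ∃ l, G.IsPath (v :: l))
    (hx : ∀ l, G.IsPath (v :: l) → x ≤ G.pathCost (v :: l)) : x ≤ G.dist v := by
  obtain ⟨l₀, hl₀⟩ := hv
  refine le_csInf ⟨_, v :: l₀, ⟨hl₀, rfl⟩, rfl⟩ ?_
  rintro _ ⟨l, ⟨hl, hhead⟩, rfl⟩
  obtain ⟨l', rfl⟩ := List.head?_eq_some_iff.1 hhead
  exact hx l' hl

theorem dist_target (G : TaskGraph n) : G.dist G.t = 0 :=
  le_antisymm (dist_le_pathCost (l := []) rfl) (G.dist_nonneg _)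

theorem IsPath.exists_cons_of_mem {v : Fin n} :
    ∀ {l : List (Fin n)}, G.IsPath l → v ∈ l → ∃ l', G.IsPath (v :: l')
  | [_], hl, hv => ⟨[], List.mem_singleton.1 hv ▸ hl⟩
  | _ :: w :: l, hl, hv => by
    rcases List.mem_cons.1 hv with rfl | hv
    · exact ⟨w :: l, hl⟩
    · exact IsPath.exists_cons_of_mem hl.2 hv

theorem IsPath.le_target {α : Type*} [Preorder α] {f : Fin n → α}
    (hf : ∀ e ∈ G.E, f e.1 ≤ f e.2) {v : Fin n} :
    ∀ {l : List (Fin n)}, G.IsPath (v :: l) → f v ≤ f G.t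
  | [], hl => (congrArg f hl).le
  | _ :: _, hl => (hf _ hl.1).trans (IsPath.le_target hf hl.2)

theorem exists_step (G : TaskGraph n) (β : ℝ) {v : Fin n} (hv : ∃ w, (v, w) ∈ G.E) :
    ∃ w, G.Step β v w :=
  Set.exists_min_image {w | (v, w) ∈ G.E} (fun w ↦ G.pc β (v, w)) (Set.toFinite _) hv

end Paths

/-- A directed acyclic graph whose only sink is the target, so that every maximal walk ends at the
target. -/
structure IsTargetDag (G : TaskGraph n) : Prop where
  wf : WellFounded fun w v : Fin n ↦ (v, w) ∈ G.E
  exists_edge : ∀ v, v ≠ G.t → ∃ w, (v, w) ∈ G.E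
  target_notMem : ∀ w, (G.t, w) ∉ G.E

namespace IsTargetDag

theorem of_rank (hrank : ∃ rank : Fin n → ℕ, ∀ e ∈ G.E, rank e.1 < rank e.2)
    (hpath : ∀ v, ∃ l, G.IsPath (v :: l)) : G.IsTargetDag := by
  obtain ⟨rank, hrank⟩ := hrank
  have rank_le : ∀ v, rank v ≤ rank G.t := fun v ↦
    (hpath v).elim fun _ hl ↦ hl.le_target fun e he ↦ (hrank e he).le
  refine ⟨?_, fun v hv ↦ ?_, fun w hw ↦ (hrank _ hw).not_ge (rank_le w)⟩
  · refine Subrelation.wf (fun {w v} h ↦ ?_) (measure fun v ↦ rank G.t - rank v).wf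
    exact Nat.sub_lt_sub_left ((hrank _ h).trans_le (rank_le w)) (hrank _ h)
  · obtain ⟨_ | ⟨w, l⟩, hl⟩ := hpath v
    · exact absurd hl hv
    · exact ⟨w, hl.1⟩

variable (hG : G.IsTargetDag)
include hG

theorem withCost (ct : Fin n × Fin n → ℝ) (h : ∀ e, 0 ≤ ct e) : (G.withCost ct h).IsTargetDag :=
  ⟨hG.wf, hG.exists_edge, hG.target_notMem⟩

theorem ne_target {v w : Fin n} (h : (v, w) ∈ G.E) : v ≠ G.t :=
  fun hv ↦ hG.target_notMem w (hv ▸ h)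

theorem induction {p : Fin n → Prop} (target : p G.t)
    (step : ∀ v, v ≠ G.t → (∀ w, (v, w) ∈ G.E → p w) → p v) (v : Fin n) : p v :=
  hG.wf.induction v fun v ih ↦ by
    by_cases hv : v = G.t
    · exact hv ▸ target
    · exact step v hv ih

theorem exists_isPath (v : Fin n) : ∃ l, G.IsPath (v :: l) := by
  induction v using hG.induction with
  | target => exact ⟨[], rfl⟩
  | step v hv ih =>
    obtain ⟨w, hw⟩ := hG.exists_edge v hv
    obtain ⟨l, hl⟩ := ih w hw
    exact ⟨w :: l, hw, hl⟩

theorem dist_le {v w : Fin n} (h : (v, w) ∈ G.E) : G.dist v ≤ G.c (v, w) + G.dist w := by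
  rw [← sub_le_iff_le_add']
  refine le_dist (hG.exists_isPath w) fun l hl ↦ ?_
  exact sub_le_iff_le_add'.2 (dist_le_pathCost (l := w :: l) ⟨h, hl⟩)

theorem exists_dist_eq {v : Fin n} (hv : v ≠ G.t) :
    ∃ w, (v, w) ∈ G.E ∧ G.dist v = G.c (v, w) + G.dist w := by
  obtain ⟨w, hw, hmin⟩ := G.exists_step 1 (hG.exists_edge v hv)
  simp only [pc, one_mul] at hmin
  refine ⟨w, hw, (hG.dist_le hw).antisymm (le_dist (hG.exists_isPath v) ?_)⟩
  rintro (_ | ⟨w', l⟩) hl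
  · exact absurd hl hv
  · exact (hmin w' hl.1).trans (add_le_add_right (dist_le_pathCost hl.2) _)

theorem le_dist_of_le_add {D : Fin n → ℝ} (target : D G.t ≤ 0)
    (step : ∀ v w, (v, w) ∈ G.E → D v ≤ G.c (v, w) + D w) (v : Fin n) : D v ≤ G.dist v := by
  induction v using hG.induction with
  | target => rwa [G.dist_target]
  | step v hv ih =>
    obtain ⟨w, hw, hdist⟩ := hG.exists_dist_eq hv
    rw [hdist]
    exact (step v w hw).trans (add_le_add_right (ih w hw) _)

theorem dist_le_of_exists_add_le {D : Fin n → ℝ} (target : 0 ≤ D G.t)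
    (step : ∀ v, v ≠ G.t → ∃ w, (v, w) ∈ G.E ∧ G.c (v, w) + D w ≤ D v) (v : Fin n) :
    G.dist v ≤ D v := by
  induction v using hG.induction with
  | target => rwa [G.dist_target]
  | step v hv ih =>
    obtain ⟨w, hw, hle⟩ := step v hv
    exact ((hG.dist_le hw).trans (add_le_add_right (ih w hw) _)).trans hle

end IsTargetDag

section Surcharge

variable {r : ℝ}

/-- The function `φ(x) = r - (r - x)₊² / r`: leaving the route at a node at distance `x` from the
target will cost `x + φ(x)` in total. -/
noncomputable def surcharge (r x : ℝ) : ℝ := r - (max 0 (r - x)) ^ 2 / r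

theorem surcharge_le (hr : 0 ≤ r) (x : ℝ) : surcharge r x ≤ r :=
  sub_le_self _ (by positivity)

theorem surcharge_monotone (hr : 0 ≤ r) : Monotone (surcharge r) := fun x y h ↦ by
  unfold surcharge
  gcongr

theorem surcharge_zero (hr : 0 ≤ r) : surcharge r 0 = 0 := by
  rw [surcharge, sub_zero, max_eq_right hr, sq, mul_self_div_self, sub_self]

theorem surcharge_nonneg (hr : 0 ≤ r) {x : ℝ} (hx : 0 ≤ x) : 0 ≤ surcharge r x :=
  (surcharge_zero hr).ge.trans (surcharge_monotone hr hx)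

theorem surcharge_of_le {x : ℝ} (hx : x ≤ r) : surcharge r x = r - (r - x) ^ 2 / r := by
  rw [surcharge, max_eq_right (sub_nonneg.2 hx)]

theorem surcharge_of_ge {x : ℝ} (hx : r ≤ x) : surcharge r x = r := by
  simp [surcharge, max_eq_left (sub_nonpos.2 hx)]

theorem lt_surcharge_of_lt {b β δ x : ℝ} (hr : 0 < r) (hb : 0 ≤ b) (hbβ : b ≤ β) (hβ : β ≤ 1)
    (hδ : 0 ≤ δ) (hx : β * r + (1 - b) * δ < x) (hxr : x ≤ r) :
    (β - b) * (r - x) + β * r + (1 - β) * surcharge r δ < surcharge r x := by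
  have hxδ : r - x < (1 - β) * (r - δ) := by
    have := mul_nonneg (sub_nonneg.2 hbβ) hδ
    linarith
  have hδr : 0 < r - δ :=
    pos_of_mul_pos_right ((sub_nonneg.2 hxr).trans_lt hxδ) (sub_nonneg.2 hβ)
  have hsum : r - x + (β - b) * r ≤ r - δ := by
    have := mul_nonneg hb hδr.le
    linarith
  have key : (r - x) * (r - x + (β - b) * r) < (1 - β) * (r - δ) ^ 2 :=
    calc (r - x) * (r - x + (β - b) * r) ≤ (r - x) * (r - δ) :=
          mul_le_mul_of_nonneg_left hsum (sub_nonneg.2 hxr)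
      _ < (1 - β) * (r - δ) * (r - δ) := mul_lt_mul_of_pos_right hxδ hδr
      _ = (1 - β) * (r - δ) ^ 2 := by ring
  have key_div : (r - x) ^ 2 / r + (β - b) * (r - x) < (1 - β) * ((r - δ) ^ 2 / r) :=
    calc (r - x) ^ 2 / r + (β - b) * (r - x) = (r - x) * (r - x + (β - b) * r) / r := by
          field_simp
      _ < (1 - β) * (r - δ) ^ 2 / r := div_lt_div_of_pos_right key hr
      _ = (1 - β) * ((r - δ) ^ 2 / r) := mul_div_assoc _ _ _
  rw [surcharge_of_le hxr, surcharge_of_le (sub_nonneg.1 hδr.le)]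
  linarith

/-- The deterrence inequality, for a route edge of cost `c` to a node at old distance `d` and new
distance `D`, and a detour edge of cost `c'` to a node at old distance `d'` and new distance `D'`.
The right-hand side is the cost of the tolled detour as perceived with bias `β`. -/
theorem route_lt_detour {b β c c' d d' D D' δ : ℝ} (hr : 0 < r) (hb : 0 < b)
    (hbβ : b ≤ β) (hβ : β ≤ 1) (hc : 0 ≤ c) (hc' : 0 ≤ c') (hδ : 0 ≤ δ)
    (hD : D ≤ d + r) (hD' : D' ≤ d' + surcharge r δ)
    (hreward : c + b * d ≤ b * r) (hgreedy : c + b * d ≤ c' + b * d')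
    (hfar : β * r + (1 - b) * δ < d') :
    c + β * D < c' + d' + surcharge r (c' + d') - (1 - β) * D' := by
  have hd : d ≤ r := le_of_mul_le_mul_left (by linarith) hb
  have hroute : c + β * D ≤ c + b * d + (β - b) * r + β * r := by
    have hβD : β * D ≤ β * (d + r) := mul_le_mul_of_nonneg_left hD (hb.le.trans hbβ)
    have hβd : (β - b) * d ≤ (β - b) * r := mul_le_mul_of_nonneg_left hd (sub_nonneg.2 hbβ)
    linarith
  have hdetour : (1 - β) * D' ≤ (1 - β) * (d' + surcharge r δ) :=
    mul_le_mul_of_nonneg_left hD' (sub_nonneg.2 hβ)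
  rcases lt_or_ge r d' with hfar' | hnear
  · have hfull : surcharge r (c' + d') = r := surcharge_of_ge (by linarith)
    have hδφ : (1 - β) * surcharge r δ ≤ (1 - β) * r :=
      mul_le_mul_of_nonneg_left (surcharge_le hr.le δ) (sub_nonneg.2 hβ)
    have hβd' : β * r < β * d' := mul_lt_mul_of_pos_left hfar' (hb.trans_le hbβ)
    linarith
  · have hmono : surcharge r d' ≤ surcharge r (c' + d') :=
      surcharge_monotone hr.le (le_add_of_nonneg_left hc')
    have hgap := lt_surcharge_of_lt hr hb.le hbβ hβ hδ hfar hnear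
    linarith

end Surcharge

/-- The data from which the cost configuration is built: the set `route` of nodes visited by an
agent with bias `b` (together with the target), the successor `shortcut` along a shortest path, and
the successor `next` which the designer leaves free of charge, namely a step of the agent on the
route and `shortcut` elsewhere. The successors of the target carry no meaning. -/
structure Plan (G : TaskGraph n) (b r : ℝ) where
  route : Set (Fin n)
  next : Fin n → Fin n
  shortcut : Fin n → Fin n
  dag : G.IsTargetDag
  source_mem : G.s ∈ route
  target_mem : G.t ∈ route
  next_mem : ∀ {v}, v ∈ route → v ≠ G.t → next v ∈ route
  step_next : ∀ {v}, v ∈ route → v ≠ G.t → G.Step b v (next v)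
  pc_next_le : ∀ {v}, v ∈ route → v ≠ G.t → G.pc b (v, next v) ≤ b * r
  next_eq_shortcut : ∀ {v}, v ∉ route → next v = shortcut v
  shortcut_edge : ∀ {v}, v ≠ G.t → (v, shortcut v) ∈ G.E
  dist_eq : ∀ {v}, v ≠ G.t → G.dist v = G.c (v, shortcut v) + G.dist (shortcut v)

open Classical in
theorem Motivating.nonempty_plan {b r : ℝ} (hG : G.IsTargetDag) (h : G.Motivating b r) :
    Nonempty (G.Plan b r) := by
  choose! greedy hgreedy using h
  choose! shortcut hshortcut using fun v (hv : v ≠ G.t) ↦ hG.exists_dist_eq hv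
  let route : Set (Fin n) := insert G.t {v | G.Reachable b v}
  have reachable {v} (hv : v ∈ route) (hvt : v ≠ G.t) : G.Reachable b v := hv.resolve_left hvt
  have step {v} (hv : v ∈ route) (hvt : v ≠ G.t) := hgreedy v (reachable hv hvt) hvt
  refine ⟨{
    route := route
    next := fun v ↦ if v ∈ route then greedy v else shortcut v
    shortcut := shortcut
    dag := hG
    source_mem := Or.inr Relation.ReflTransGen.refl
    target_mem := Or.inl rfl
    next_mem := fun hv hvt ↦ ?_
    step_next := fun hv hvt ↦ ?_
    pc_next_le := fun hv hvt ↦ ?_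
    next_eq_shortcut := fun hv ↦ if_neg hv
    shortcut_edge := fun hvt ↦ (hshortcut _ hvt).1
    dist_eq := fun hvt ↦ (hshortcut _ hvt).2 }⟩
  all_goals rw [if_pos hv]
  · exact Or.inr ((reachable hv hvt).tail (step hv hvt).1)
  · exact (step hv hvt).1
  · exact (step hv hvt).2

namespace Plan

variable {b r R β : ℝ} {v w : Fin n}

theorem ne_target_of_notMem (P : G.Plan b r) (hroute : v ∉ P.route) : v ≠ G.t :=
  fun hv ↦ hroute (hv ▸ P.target_mem)

theorem next_edge (P : G.Plan b r) (hv : v ≠ G.t) : (v, P.next v) ∈ G.E := by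
  by_cases hroute : v ∈ P.route
  · exact (P.step_next hroute hv).1
  · exact P.next_eq_shortcut hroute ▸ P.shortcut_edge hv

theorem dist_shortcut_le (P : G.Plan b r) (hv : v ≠ G.t) : G.dist (P.shortcut v) ≤ G.dist v :=
  P.dist_eq hv ▸ le_add_of_nonneg_left (G.c_nonneg _)

theorem dist_next_le (P : G.Plan b r) (hb : 0 < b) (hroute : v ∈ P.route) (hv : v ≠ G.t) :
    G.dist (P.next v) ≤ r :=
  le_of_mul_le_mul_left ((le_add_of_nonneg_left (G.c_nonneg _)).trans (P.pc_next_le hroute hv)) hb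

/-- The distance to the target that the tolls are designed to produce. It has to be defined before
the tolls, which are computed from it; see `Plan.dist_tolled`. -/
noncomputable def tolledDist (P : G.Plan b r) : Fin n → ℝ :=
  P.dag.wf.fix fun v D ↦
    if hv : v = G.t then 0
    else min (G.dist v + surcharge r (G.dist v)) (G.c (v, P.next v) + D (P.next v) (P.next_edge hv))

section TolledDist

variable (P : G.Plan b r)

theorem tolledDist_target : P.tolledDist G.t = 0 := by
  rw [tolledDist, WellFounded.fix_eq, dif_pos rfl]

theorem tolledDist_eq_min (hv : v ≠ G.t) :
    P.tolledDist v = min (G.dist v + surcharge r (G.dist v))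
      (G.c (v, P.next v) + P.tolledDist (P.next v)) := by
  rw [tolledDist, WellFounded.fix_eq, dif_neg hv]

theorem tolledDist_nonneg (hr : 0 ≤ r) (v : Fin n) : 0 ≤ P.tolledDist v := by
  induction v using P.dag.induction with
  | target => exact P.tolledDist_target.ge
  | step v hv ih =>
    rw [P.tolledDist_eq_min hv]
    have hd := G.dist_nonneg v
    exact le_min (add_nonneg hd (surcharge_nonneg hr hd))
      (add_nonneg (G.c_nonneg _) (ih _ (P.next_edge hv)))

theorem tolledDist_le (hr : 0 ≤ r) (v : Fin n) :
    P.tolledDist v ≤ G.dist v + surcharge r (G.dist v) := by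
  by_cases hv : v = G.t
  · rw [hv, P.tolledDist_target, G.dist_target, surcharge_zero hr, zero_add]
  · exact (P.tolledDist_eq_min hv).trans_le (min_le_left _ _)

theorem tolledDist_le_add (hr : 0 ≤ r) (v : Fin n) : P.tolledDist v ≤ G.dist v + r :=
  (P.tolledDist_le hr v).trans (add_le_add_right (surcharge_le hr _) _)

theorem shortcut_add_tolledDist_le (hr : 0 ≤ r) (hv : v ≠ G.t) :
    G.c (v, P.shortcut v) + P.tolledDist (P.shortcut v) ≤
      G.dist v + surcharge r (G.dist v) := by
  have hD := P.tolledDist_le hr (P.shortcut v)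
  have hφ := surcharge_monotone hr (P.dist_shortcut_le hv)
  have hd := P.dist_eq hv
  linarith

theorem tolledDist_of_notMem (hr : 0 ≤ r) (hroute : v ∉ P.route) :
    P.tolledDist v = G.c (v, P.shortcut v) + P.tolledDist (P.shortcut v) := by
  have hv : v ≠ G.t := P.ne_target_of_notMem hroute
  rw [P.tolledDist_eq_min hv, P.next_eq_shortcut hroute,
    min_eq_right (P.shortcut_add_tolledDist_le hr hv)]

end TolledDist

/-- The extra costs: `next` is free, the total cost of leaving the route along `shortcut` is raised
to `d(v) + φ(d(v))`, and every other edge is too expensive for the agent to consider. -/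
noncomputable def toll (P : G.Plan b r) (e : Fin n × Fin n) : ℝ :=
  if e.1 = G.t ∨ e.2 = P.next e.1 then 0
  else if e.2 = P.shortcut e.1 then
    G.dist e.1 + surcharge r (G.dist e.1) - G.c e - P.tolledDist e.2
  else P.tolledDist e.1 + 1

section Toll

variable (P : G.Plan b r)

theorem toll_next (v : Fin n) : P.toll (v, P.next v) = 0 := if_pos (Or.inr rfl)

theorem toll_shortcut (hv : v ≠ G.t) (hne : P.shortcut v ≠ P.next v) :
    P.toll (v, P.shortcut v) = G.dist v + surcharge r (G.dist v) - G.c (v, P.shortcut v)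
      - P.tolledDist (P.shortcut v) := by
  simp [toll, hv, hne]

theorem toll_of_ne (hv : v ≠ G.t) (hnext : w ≠ P.next v) (hshortcut : w ≠ P.shortcut v) :
    P.toll (v, w) = P.tolledDist v + 1 := by
  simp [toll, hv, hnext, hshortcut]

theorem toll_nonneg (hr : 0 ≤ r) (e : Fin n × Fin n) : 0 ≤ P.toll e := by
  obtain ⟨v, w⟩ := e
  unfold toll
  split_ifs with hfree hshortcut
  · exact le_rfl
  · have := P.shortcut_add_tolledDist_le hr (not_or.1 hfree).1
    simp only at hshortcut ⊢
    rw [hshortcut]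
    linarith
  · exact add_nonneg (P.tolledDist_nonneg hr _) zero_le_one

theorem tolledDist_le_edge (hr : 0 ≤ r) (h : (v, w) ∈ G.E) :
    P.tolledDist v ≤ G.c (v, w) + P.toll (v, w) + P.tolledDist w := by
  have hv := P.dag.ne_target h
  by_cases hnext : w = P.next v
  · rw [hnext, P.toll_next, add_zero, P.tolledDist_eq_min hv]
    exact min_le_right _ _
  by_cases hshortcut : w = P.shortcut v
  · subst hshortcut
    rw [P.toll_shortcut hv hnext]
    linarith [P.tolledDist_le hr v]
  · rw [P.toll_of_ne hv hnext hshortcut]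
    linarith [G.c_nonneg (v, w), P.tolledDist_nonneg hr w]

theorem exists_edge_le_tolledDist (hr : 0 ≤ r) (hv : v ≠ G.t) :
    ∃ w, (v, w) ∈ G.E ∧ G.c (v, w) + P.toll (v, w) + P.tolledDist w ≤ P.tolledDist v := by
  rw [P.tolledDist_eq_min hv]
  rcases le_or_gt (G.c (v, P.next v) + P.tolledDist (P.next v))
    (G.dist v + surcharge r (G.dist v)) with hle | hlt
  · refine ⟨P.next v, P.next_edge hv, ?_⟩
    rw [P.toll_next, add_zero, min_eq_right hle]
  · have hne : P.shortcut v ≠ P.next v := fun h ↦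
      hlt.not_ge (h ▸ P.shortcut_add_tolledDist_le hr hv)
    refine ⟨P.shortcut v, P.shortcut_edge hv, ?_⟩
    rw [P.toll_shortcut hv hne, min_eq_left hlt.le]
    linarith

end Toll

/-- The task graph with the tolls of the plan added to its costs. -/
noncomputable def tolled (P : G.Plan b r) (hr : 0 ≤ r) : TaskGraph n :=
  G.withCost P.toll (P.toll_nonneg hr)

theorem dist_tolled (P : G.Plan b r) (hr : 0 ≤ r) (v : Fin n) :
    (P.tolled hr).dist v = P.tolledDist v := by
  have hdag : (P.tolled hr).IsTargetDag := P.dag.withCost _ _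
  apply le_antisymm
  · exact hdag.dist_le_of_exists_add_le P.tolledDist_target.ge
      (fun v hv ↦ P.exists_edge_le_tolledDist hr hv) v
  · exact hdag.le_dist_of_le_add P.tolledDist_target.le (fun v w h ↦ P.tolledDist_le_edge hr h) v

theorem pc_tolled (P : G.Plan b r) (hr : 0 ≤ r) (β : ℝ) (v w : Fin n) :
    (P.tolled hr).pc β (v, w) = G.c (v, w) + P.toll (v, w) + β * P.tolledDist w := by
  rw [pc, P.dist_tolled hr]
  rfl

theorem eq_next_or_eq_shortcut_of_step (P : G.Plan b r) (hr : 0 ≤ r) (hβ₀ : 0 ≤ β) (hβ₁ : β ≤ 1)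
    (h : (P.tolled hr).Step β v w) : w = P.next v ∨ w = P.shortcut v := by
  by_contra! hne
  obtain ⟨hedge, hmin⟩ := h
  have hv : v ≠ G.t := P.dag.ne_target hedge
  obtain ⟨w', hedge', hattained⟩ := P.exists_edge_le_tolledDist hr hv
  have hle := hmin w' hedge'
  rw [P.pc_tolled, P.pc_tolled, P.toll_of_ne hv hne.1 hne.2] at hle
  have hw : 0 ≤ β * P.tolledDist w := mul_nonneg hβ₀ (P.tolledDist_nonneg hr w)
  have hw' : β * P.tolledDist w' ≤ P.tolledDist w' :=
    mul_le_of_le_one_left (P.tolledDist_nonneg hr w') hβ₁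
  linarith [G.c_nonneg (v, w)]

/-- The nodes from which an agent with bias `b` is kept motivated by the reward `R` while following
`shortcut` until it is back on the route. -/
inductive Safe (P : G.Plan b r) (R : ℝ) : Fin n → Prop
  | route {v : Fin n} : v ∈ P.route → P.Safe R v
  | detour {v : Fin n} : G.c (v, P.shortcut v) + b * P.tolledDist (P.shortcut v) ≤ b * R →
      P.Safe R (P.shortcut v) → P.Safe R v

/-- `δ` is the distance to the target at the point where the shortest path from `v` meets the
route. -/
theorem safe_or_lt_dist (P : G.Plan b r) (hr : 0 ≤ r) (hb₀ : 0 ≤ b) (hb₁ : b ≤ 1) (R : ℝ)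
    (v : Fin n) :
    ∃ δ, 0 ≤ δ ∧ δ ≤ G.dist v ∧ P.tolledDist v ≤ G.dist v + surcharge r δ ∧
      (P.Safe R v ∨ b * (R - r) + (1 - b) * δ < G.dist v) := by
  induction v using P.dag.wf.induction with | _ v ih =>
  by_cases hroute : v ∈ P.route
  · exact ⟨G.dist v, G.dist_nonneg v, le_rfl, P.tolledDist_le hr v, Or.inl (Safe.route hroute)⟩
  · have hv : v ≠ G.t := P.ne_target_of_notMem hroute
    obtain ⟨δ, hδ₀, hδ, hD, hsafe⟩ := ih _ (P.shortcut_edge hv)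
    have hd := P.dist_eq hv
    have hDv := P.tolledDist_of_notMem hr hroute
    refine ⟨δ, hδ₀, hδ.trans (P.dist_shortcut_le hv), by linarith, ?_⟩
    rcases hsafe with hsafe | hfar
    · refine or_iff_not_imp_left.2 fun hexposed ↦ ?_
      have hstuck : b * R < G.c (v, P.shortcut v) + b * P.tolledDist (P.shortcut v) :=
        not_le.1 fun hle ↦ hexposed (Safe.detour hle hsafe)
      have hbD := mul_le_mul_of_nonneg_left (P.tolledDist_le_add hr (P.shortcut v)) hb₀
      have hbδ := mul_le_mul_of_nonneg_left hδ (sub_nonneg.2 hb₁)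
      linarith
    · exact Or.inr (hfar.trans_le (P.dist_shortcut_le hv))

theorem safe_shortcut_of_step (P : G.Plan b r) (hr : 0 < r) (hb : 0 < b) (hbβ : b ≤ β)
    (hβ : β ≤ 1) (hR : β * r ≤ b * (R - r)) (hroute : v ∈ P.route)
    (hne : P.shortcut v ≠ P.next v) (h : (P.tolled hr.le).Step β v (P.shortcut v)) :
    P.Safe R (P.shortcut v) := by
  have hv : v ≠ G.t := P.dag.ne_target h.1
  obtain ⟨δ, hδ₀, -, hD, hsafe | hfar⟩ :=
    P.safe_or_lt_dist hr.le hb.le (hbβ.trans hβ) R (P.shortcut v)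
  · exact hsafe
  · have hpref := h.2 _ (P.next_edge hv)
    rw [P.pc_tolled, P.pc_tolled, P.toll_next, P.toll_shortcut hv hne, P.dist_eq hv] at hpref
    have hdeter := route_lt_detour hr hb hbβ hβ (G.c_nonneg _) (G.c_nonneg _) hδ₀
      (P.tolledDist_le_add hr.le _) hD (P.pc_next_le hroute hv)
      ((P.step_next hroute hv).2 _ (P.shortcut_edge hv)) (by linarith)
    linarith

theorem Safe.of_step {P : G.Plan b r} (hr : 0 < r) (hb : 0 < b) (hbβ : b ≤ β)
    (hβ : β ≤ 1) (hR : β * r ≤ b * (R - r)) (hsafe : P.Safe R v)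
    (h : (P.tolled hr.le).Step β v w) : P.Safe R w := by
  have hv : v ≠ G.t := P.dag.ne_target h.1
  by_cases hroute : v ∈ P.route
  · by_cases hnext : w = P.next v
    · exact hnext ▸ Safe.route (P.next_mem hroute hv)
    · obtain rfl : w = P.shortcut v :=
        (P.eq_next_or_eq_shortcut_of_step hr.le (hb.le.trans hbβ) hβ h).resolve_left hnext
      exact P.safe_shortcut_of_step hr hb hbβ hβ hR hroute hnext h
  · have hw : w = P.shortcut v := by
      simpa only [P.next_eq_shortcut hroute, or_self] using
        P.eq_next_or_eq_shortcut_of_step hr.le (hb.le.trans hbβ) hβ h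
    cases hsafe with
    | route hmem => exact absurd hmem hroute
    | detour _ hsafe => exact hw ▸ hsafe

theorem Safe.pc_next_le {P : G.Plan b r} (hr : 0 ≤ r) (hb : 0 < b) (hbβ : b ≤ β)
    (hR : β * r ≤ b * (R - r)) (hv : v ≠ G.t) (hsafe : P.Safe R v) :
    (P.tolled hr).pc β (v, P.next v) ≤ β * R := by
  have hβ : 0 ≤ β := hb.le.trans hbβ
  rw [P.pc_tolled, P.toll_next, add_zero]
  by_cases hroute : v ∈ P.route
  · have hreward : G.c (v, P.next v) + b * G.dist (P.next v) ≤ b * r := P.pc_next_le hroute hv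
    have hbR : r ≤ R - r :=
      le_of_mul_le_mul_left ((mul_le_mul_of_nonneg_right hbβ hr).trans hR) hb
    calc G.c (v, P.next v) + β * P.tolledDist (P.next v)
        ≤ b * (r - G.dist (P.next v)) + β * (G.dist (P.next v) + r) :=
          add_le_add (by linarith) (mul_le_mul_of_nonneg_left (P.tolledDist_le_add hr _) hβ)
      _ ≤ β * (r - G.dist (P.next v)) + β * (G.dist (P.next v) + r) := by
          have := sub_nonneg.2 (P.dist_next_le hb hroute hv)
          gcongr
      _ = β * (r + r) := by ring
      _ ≤ β * R := mul_le_mul_of_nonneg_left (by linarith) hβ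
  · rw [P.next_eq_shortcut hroute]
    cases hsafe with
    | route hmem => exact absurd hmem hroute
    | detour hle _ =>
      have hDR : P.tolledDist (P.shortcut v) ≤ R :=
        le_of_mul_le_mul_left ((le_add_of_nonneg_left (G.c_nonneg _)).trans hle) hb
      have := mul_le_mul_of_nonneg_right hbβ (sub_nonneg.2 hDR)
      linarith

theorem motivatingV_tolled (P : G.Plan b r) (hr : 0 < r) (hb : 0 < b) {βc : Fin n → ℝ}
    (hβ : ∀ v, βc v ∈ Set.Icc b 1) (hR : ∀ v, βc v * r ≤ b * (R - r)) :
    (P.tolled hr.le).MotivatingV βc R := by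
  have hsafe : ∀ v, (P.tolled hr.le).ReachableV βc v → P.Safe R v := fun v hreach ↦ by
    induction hreach with
    | refl => exact Safe.route P.source_mem
    | @tail v w _ hstep hv => exact hv.of_step hr hb (hβ v).1 (hβ v).2 (hR v) hstep
  intro v hreach hv
  obtain ⟨w, hw⟩ := (P.tolled hr.le).exists_step (βc v) (P.dag.exists_edge v hv)
  exact ⟨w, hw, (hw.2 _ (P.next_edge hv)).trans
    ((hsafe v hreach).pc_next_le hr.le hb (hβ v).1 (hR v) hv)⟩

end Plan

section Rewards

variable {B : Set ℝ} {b m r : ℝ}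

/-- The rewards for which some cost configuration is motivating for all present bias configurations
in `B^V`; their infimum is `rewardInfV G B`. -/
def motivatingRewards (G : TaskGraph n) (B : Set ℝ) : Set ℝ :=
  {r | ∃ ct : Fin n × Fin n → ℝ, ∃ h : ∀ e, 0 ≤ ct e,
    ∀ βc : Fin n → ℝ, (∀ v, βc v ∈ B) → (G.withCost ct h).MotivatingV βc r}

theorem rewardInfV_eq_sInf (G : TaskGraph n) (B : Set ℝ) :
    G.rewardInfV B = sInf (G.motivatingRewards B) := rfl

theorem mem_motivatingRewards_singleton :
    r ∈ G.motivatingRewards {b} ↔ ∃ ct, ∃ h, (G.withCost ct h).Motivating b r := by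
  refine exists₂_congr fun ct h ↦ ⟨fun hV ↦ hV (fun _ ↦ b) fun _ ↦ rfl, fun hb βc hβc ↦ ?_⟩
  obtain rfl : βc = fun _ ↦ b := funext hβc
  exact hb

theorem rewardInf_singleton_eq_sInf (G : TaskGraph n) (b : ℝ) :
    G.rewardInf {b} = sInf (G.motivatingRewards {b}) := by
  rw [rewardInf]
  congr 1
  ext r
  simp only [mem_motivatingRewards_singleton, Set.mem_ofPred_eq, Set.mem_singleton_iff, forall_eq]

theorem motivatingRewards_anti (G : TaskGraph n) : Antitone G.motivatingRewards :=
  fun _ _ hsub _ ⟨ct, h, hV⟩ ↦ ⟨ct, h, fun βc hβc ↦ hV βc fun v ↦ hsub (hβc v)⟩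

theorem Motivating.mono {β r' : ℝ} (hβ : 0 ≤ β) (hr : r ≤ r') (h : G.Motivating β r) :
    G.Motivating β r' := fun v hreach hv ↦
  (h v hreach hv).imp fun _ ⟨hstep, hle⟩ ↦ ⟨hstep, hle.trans (mul_le_mul_of_nonneg_left hr hβ)⟩

theorem withCost_withCost (G : TaskGraph n) (ct ct' : Fin n × Fin n → ℝ) (h : ∀ e, 0 ≤ ct e)
    (h' : ∀ e, 0 ≤ ct' e) :
    (G.withCost ct h).withCost ct' h' =
      G.withCost (fun e ↦ ct e + ct' e) fun e ↦ add_nonneg (h e) (h' e) := by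
  simp only [withCost, add_assoc]

theorem mem_motivatingRewards_of_withCost {ct : Fin n × Fin n → ℝ} {h : ∀ e, 0 ≤ ct e}
    (hr : r ∈ (G.withCost ct h).motivatingRewards B) : r ∈ G.motivatingRewards B := by
  obtain ⟨ct', h', hV⟩ := hr
  rw [withCost_withCost] at hV
  exact ⟨_, _, hV⟩

theorem nonneg_of_mem_motivatingRewards {β : ℝ} (hst : G.s ≠ G.t) (hβ : β ∈ B) (hβ₀ : 0 < β)
    (hr : r ∈ G.motivatingRewards B) : 0 ≤ r := by
  obtain ⟨ct, h, hV⟩ := hr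
  obtain ⟨w, -, hle⟩ := hV (fun _ ↦ β) (fun _ ↦ hβ) G.s Relation.ReflTransGen.refl hst
  exact nonneg_of_mul_nonneg_right (((G.withCost ct h).pc_nonneg hβ₀.le _).trans hle) hβ₀

namespace IsTargetDag

variable (hG : G.IsTargetDag)
include hG

theorem motivatingRewards_eq_univ (hst : G.s = G.t) (B : Set ℝ) :
    G.motivatingRewards B = Set.univ := by
  refine Set.eq_univ_of_forall fun r ↦ ⟨0, fun _ ↦ le_rfl, fun βc _ v hv hvt ↦ ?_⟩
  rcases Relation.ReflTransGen.cases_head hv with h | ⟨w, hstep, -⟩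
  · exact absurd (h.symm.trans hst) hvt
  · exact absurd hst (hG.ne_target hstep.1)

/-- When `s = t`, every real number is a motivating reward and the infimum has the junk
value `0`. -/
theorem rewardInfV_of_source_eq_target (hst : G.s = G.t) (B : Set ℝ) : G.rewardInfV B = 0 := by
  rw [rewardInfV_eq_sInf, hG.motivatingRewards_eq_univ hst, Real.sInf_univ]

theorem rewardInf_singleton_nonneg (hb : 0 < b) : 0 ≤ G.rewardInf {b} := by
  rw [rewardInf_singleton_eq_sInf]
  by_cases hst : G.s = G.t
  · exact (hG.rewardInfV_of_source_eq_target hst {b}).ge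
  · exact Real.sInf_nonneg fun r hr ↦
      nonneg_of_mem_motivatingRewards hst (Set.mem_singleton b) hb hr

theorem exists_mem_motivatingRewards_Ici (hb : 0 < b) :
    ∃ K, K ∈ G.motivatingRewards (Set.Ici b) := by
  set H := G.withCost 0 fun _ ↦ le_rfl
  obtain ⟨K, hK⟩ := (Set.finite_range fun e ↦ H.c e / b + H.dist e.2).bddAbove
  refine ⟨K, 0, fun _ ↦ le_rfl, fun βc hβc v _ hv ↦ ?_⟩
  obtain ⟨w, hw⟩ := H.exists_step (βc v) (hG.exists_edge v hv)
  refine ⟨w, hw, ?_⟩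
  have hβ : 0 ≤ βc v := hb.le.trans (hβc v)
  calc H.c (v, w) + βc v * H.dist w
      ≤ βc v * (H.c (v, w) / b) + βc v * H.dist w := by
        rw [mul_div_left_comm]
        exact add_le_add_left
          (le_mul_of_one_le_right (H.c_nonneg _) ((one_le_div hb).2 (hβc v))) _
    _ = βc v * (H.c (v, w) / b + H.dist w) := (mul_add _ _ _).symm
    _ ≤ βc v * K := mul_le_mul_of_nonneg_left (hK ⟨(v, w), rfl⟩) hβ

theorem bddAbove_rewardInf_singleton (hb : 0 < b) :
    BddAbove ((fun β ↦ G.rewardInf {β}) '' Set.Ici b) := by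
  obtain ⟨K, hK⟩ := hG.exists_mem_motivatingRewards_Ici hb
  refine ⟨max K 0, ?_⟩
  rintro _ ⟨β, hβ, rfl⟩
  simp only [rewardInf_singleton_eq_sInf]
  by_cases hst : G.s = G.t
  · exact (hG.rewardInfV_of_source_eq_target hst {β}).trans_le (le_max_right _ _)
  · refine (csInf_le ⟨0, fun r ↦ ?_⟩ ?_).trans (le_max_left K 0)
    · exact nonneg_of_mem_motivatingRewards hst (Set.mem_singleton β) (hb.trans_le hβ)
    · exact G.motivatingRewards_anti (Set.singleton_subset_iff.2 hβ) hK

theorem mul_mem_motivatingRewards_Icc (hr : 0 < r) (hb : 0 < b) (hm : m ≤ 1)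
    (h : G.Motivating b r) : (m / b + 1) * r ∈ G.motivatingRewards (Set.Icc b m) := by
  obtain ⟨P⟩ := h.nonempty_plan hG
  refine ⟨P.toll, P.toll_nonneg hr.le, fun βc hβc ↦ P.motivatingV_tolled hr hb
    (fun v ↦ ⟨(hβc v).1, (hβc v).2.trans hm⟩) fun v ↦ ?_⟩
  calc βc v * r ≤ m * r := mul_le_mul_of_nonneg_right (hβc v).2 hr.le
    _ = b * ((m / b + 1) * r - r) := by field_simp; ring

theorem mul_mem_motivatingRewards_of_rewardInf_lt (hb : 0 < b) (hm : m ≤ 1)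
    (hr : G.rewardInf {b} < r) : (m / b + 1) * r ∈ G.motivatingRewards (Set.Icc b m) := by
  obtain ⟨K, hK⟩ := hG.exists_mem_motivatingRewards_Ici hb
  have hne : (G.motivatingRewards {b}).Nonempty :=
    ⟨K, G.motivatingRewards_anti (Set.singleton_subset_iff.2 Set.self_mem_Ici) hK⟩
  have hr₀ : 0 < r := (hG.rewardInf_singleton_nonneg hb).trans_lt hr
  rw [rewardInf_singleton_eq_sInf] at hr
  obtain ⟨r', hr', hlt⟩ := exists_lt_of_csInf_lt hne hr
  obtain ⟨ct, h, hmot⟩ := mem_motivatingRewards_singleton.1 hr'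
  exact mem_motivatingRewards_of_withCost
    ((hG.withCost ct h).mul_mem_motivatingRewards_Icc hr₀ hb hm (hmot.mono hb.le hlt.le))

end IsTargetDag

end Rewards

end TaskGraph

open TaskGraph in
theorem price_of_variability_le_general {n : ℕ} {G : TaskGraph n} (hG : G.IsTargetDag)
    {B : Set ℝ} (hB : B.Nonempty) {b m : ℝ} (hb : 0 < b) (hm : m ≤ 1) (hBbm : B ⊆ Set.Icc b m) :
    G.rewardInfV B ≤ (m / b + 1) * G.rewardInf {b} := by
  obtain ⟨β, hβ⟩ := hB
  have hβ₀ : 0 < β := hb.trans_le (hBbm hβ).1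
  have hτ : 0 < m / b + 1 := by
    have := hβ₀.trans_le (hBbm hβ).2
    positivity
  by_cases hst : G.s = G.t
  · rw [hG.rewardInfV_of_source_eq_target hst]
    exact mul_nonneg hτ.le (hG.rewardInf_singleton_nonneg hb)
  · rw [← div_le_iff₀' hτ]
    refine le_of_forall_gt_imp_ge_of_dense fun r hr ↦ (div_le_iff₀' hτ).2 ?_
    exact csInf_le ⟨0, fun _ ↦ nonneg_of_mem_motivatingRewards hst hβ hβ₀⟩
      (G.motivatingRewards_anti hBbm (hG.mul_mem_motivatingRewards_of_rewardInf_lt hb hm hr))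

open TaskGraph in
/-- The price of variability is at most `τ + 1`, where `τ = max B / min B` is the
range of the present bias set: for every task graph `G` (a finite DAG in which every
node lies on some `s`–`t` path) and every `B ⊆ (0,1]` with minimum `b` and maximum
`mB`, the infimal reward `r(G,B^V)` admitting a cost configuration motivating for all
present bias configurations `β ∈ B^V` is at most `(τ + 1)` times the supremum over
`β ∈ B` of the infimal reward `r(G,{β})` for the fixed bias `β`. -/
theorem price_of_variability_le (n : ℕ) (G : TaskGraph n)
    (hdag : ∃ rank : Fin n → ℕ, ∀ e ∈ G.E, rank e.1 < rank e.2)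
    (hconn : ∀ v : Fin n, ∃ P : List (Fin n),
      G.IsPath P ∧ P.head? = some G.s ∧ v ∈ P)
    (B : Set ℝ) (hB : B ⊆ Set.Ioc 0 1)
    (b mB : ℝ) (hb : IsLeast B b) (hmB : IsGreatest B mB) :
    G.rewardInfV B ≤ (mB / b + 1) * sSup ((fun β => G.rewardInf {β}) '' B) := by
  have hG : G.IsTargetDag := .of_rank hdag fun v ↦
    let ⟨_, hP, _, hv⟩ := hconn v
    hP.exists_cons_of_mem hv
  have hb₀ : 0 < b := (hB hb.1).1
  have hτ : 0 ≤ mB / b + 1 := by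
    have := (hB hmB.1).1
    positivity
  calc G.rewardInfV B
      ≤ (mB / b + 1) * G.rewardInf {b} :=
        price_of_variability_le_general hG ⟨b, hb.1⟩ hb₀ (hB hmB.1).2
          fun β hβ ↦ ⟨hb.2 hβ, hmB.2 hβ⟩
    _ ≤ (mB / b + 1) * sSup ((fun β => G.rewardInf {β}) '' B) :=
        mul_le_mul_of_nonneg_left (le_csSup ((hG.bddAbove_rewardInf_singleton hb₀).mono
          (Set.image_mono fun β hβ ↦ hb.2 hβ)) ⟨b, hb.1, rfl⟩) hτ
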